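/- For any skew shape λ/μ, rank(λ/μ) equals the number of columns of code(λ/μ) equal to (0;1) (i.e., with c_i = 0 and d_i = 1), and this also equals the number of columns equal to (1;0). -/

import Mathlib

/-!
Write `p_f i = f i - i - 1` (`stepPos`) for the position of the vertical boundary step of the
partition `f` in row `i`, and let `v k` say that the upper envelope, the boundary of `μ`, has a
vertical step at `k`. The square of row `i` and content `k` lies in `λ/μ` iff
`p_μ i < k ≤ p_λ i`.

The first square of a nonempty diagonal of content `k` is an outside corner iff the upper
envelope turns from vertical to horizontal there, i.e. `v (k - 1)` and not `v k`
(`outside_iff`), and an inside corner iff the turn is the opposite one (`inside_iff`). So the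
contribution of row `i` to `d⁺ - d⁻` is the sum of `[v (k - 1)] - [v k]` over
`p_μ i < k ≤ p_λ i`, which telescopes to `[v (p_μ i)] - [v (p_λ i)] = 1 - [v (p_λ i)]`
(`turns_telescope`). Summing over the rows counts the vertical steps `p_λ i` of the lower
envelope that are not vertical steps of the upper one: these are the columns `(0;1)`.

Below some row `N` both partitions vanish and the vertical steps agree; above it each envelope
has exactly `N` vertical steps. Hence the two set differences, which are the columns `(0;1)`
and `(1;0)`, have equally many elements.
-/

open Set Polynomial

namespace SkewBorder

noncomputable section

/-- A partition, as a weakly decreasing sequence of naturals that is eventually zero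
(equivalently, has finite sum). -/
def IsPartitionFn (f : ℕ → ℕ) : Prop :=
  (∀ i j, i ≤ j → f j ≤ f i) ∧ ∃ N, ∀ i, N ≤ i → f i = 0

/-- A skew shape `λ/μ`, given by a pair of partitions `μ ⊆ λ`. -/
structure SkewShape where
  lam : ℕ → ℕ
  mu : ℕ → ℕ
  lam_part : IsPartitionFn lam
  mu_part : IsPartitionFn mu
  mu_le : ∀ i, mu i ≤ lam i

/-- The Young diagram (set of squares) of a skew diagram determined by outer
function `f` and inner function `g`; square `(i,j)` (row `i`, column `j`,
`0`-based, rows increasing downwards) belongs to it iff `0 ≤ i` and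
`g i ≤ j < f i`. -/
def skewCells (f g : ℕ → ℕ) : Set (ℤ × ℤ) :=
  {p | 0 ≤ p.1 ∧ (g p.1.toNat : ℤ) ≤ p.2 ∧ p.2 < (f p.1.toNat : ℤ)}

/-- The squares of the skew shape `λ/μ`. -/
def SkewShape.cells (sh : SkewShape) : Set (ℤ × ℤ) := skewCells sh.lam sh.mu

/-- An outside top corner of `λ/μ`. -/
def OutsideCorner (sh : SkewShape) (p : ℤ × ℤ) : Prop :=
  p ∈ sh.cells ∧ (p.1 - 1, p.2) ∉ sh.cells ∧ (p.1, p.2 - 1) ∉ sh.cells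

/-- An inside top corner of `λ/μ`. -/
def InsideCorner (sh : SkewShape) (p : ℤ × ℤ) : Prop :=
  p ∈ sh.cells ∧ (p.1 - 1, p.2) ∈ sh.cells ∧ (p.1, p.2 - 1) ∈ sh.cells ∧
    (p.1 - 1, p.2 - 1) ∉ sh.cells

/-- `d⁺(λ/μ)`: the total number of outside diagonal squares. -/
def SkewShape.dplus (sh : SkewShape) : ℕ :=
  {p : ℤ × ℤ | p ∈ sh.cells ∧ ∃ q : ℤ × ℤ, OutsideCorner sh q ∧
    ∃ n : ℕ, p = (q.1 + n, q.2 + n)}.ncard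

/-- `d⁻(λ/μ)`: the total number of inside diagonal squares. -/
def SkewShape.dminus (sh : SkewShape) : ℕ :=
  {p : ℤ × ℤ | p ∈ sh.cells ∧ ∃ q : ℤ × ℤ, InsideCorner sh q ∧
    ∃ n : ℕ, p = (q.1 + n, q.2 + n)}.ncard

/-- The (Durfee/Frobenius) rank of a skew shape: `rank(λ/μ) = d⁺(λ/μ) − d⁻(λ/μ)`. -/
def SkewShape.rank (sh : SkewShape) : ℕ := sh.dplus - sh.dminus

/-- Two squares are adjacent if they share an edge. -/
def CellAdj (p q : ℤ × ℤ) : Prop :=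
  (p.1 = q.1 ∧ (p.2 = q.2 + 1 ∨ q.2 = p.2 + 1)) ∨
  (p.2 = q.2 ∧ (p.1 = q.1 + 1 ∨ q.1 = p.1 + 1))

/-- A set of squares is connected (equivalently, the interior of the corresponding
union of closed unit squares is a connected open set): it is nonempty and any two
of its squares are joined by a path of edge-adjacent squares inside the set. -/
def IsConnectedCellSet (B : Set (ℤ × ℤ)) : Prop :=
  B.Nonempty ∧ ∀ p ∈ B, ∀ q ∈ B,
    Relation.ReflTransGen (fun x y => y ∈ B ∧ CellAdj x y) p q

/-- A set of squares is a skew diagram if it is the diagram of some `λ/μ`. -/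
def IsSkewDiagram (B : Set (ℤ × ℤ)) : Prop :=
  ∃ f g : ℕ → ℕ, IsPartitionFn f ∧ IsPartitionFn g ∧ (∀ i, g i ≤ f i) ∧ B = skewCells f g

/-- A border strip: a nonempty connected skew shape with no `2 × 2` square. -/
def IsBorderStrip (B : Set (ℤ × ℤ)) : Prop :=
  IsSkewDiagram B ∧ IsConnectedCellSet B ∧
    ∀ p : ℤ × ℤ, ¬ (p ∈ B ∧ (p.1 + 1, p.2) ∈ B ∧ (p.1, p.2 + 1) ∈ B ∧ (p.1 + 1, p.2 + 1) ∈ B)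

/-- A border strip decomposition of `λ/μ`: a partition of its squares into
pairwise disjoint border strips. -/
def IsBSD (sh : SkewShape) (D : Set (Set (ℤ × ℤ))) : Prop :=
  (∀ B ∈ D, IsBorderStrip B) ∧ D.PairwiseDisjoint id ∧ ⋃₀ D = sh.cells

/-- A minimal border strip decomposition: one with the fewest possible strips. -/
def IsMinBSD (sh : SkewShape) (D : Set (Set (ℤ × ℤ))) : Prop :=
  IsBSD sh D ∧ ∀ D', IsBSD sh D' → D.ncard ≤ D'.ncard

/-- `mbsd(λ/μ)`: the number of minimal border strip decompositions. -/
noncomputable def mbsd (sh : SkewShape) : ℕ := {D : Set (Set (ℤ × ℤ)) | IsMinBSD sh D}.ncard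

/-- The step at diagonal position `k` of the boundary path of the partition `f`
(read from lower left to upper right) is vertical, i.e. the corresponding letter of
the Comét code of `f` is `0`.  (Vertical steps occur exactly at the positions
`f i − i − 1`, `i ≥ 0`.)  For a skew shape `λ/μ`, taking `f = λ` gives the lower
envelope (the top row `c` of `code(λ/μ)`) and `f = μ` gives the upper envelope
(the bottom row `d`). -/
def vertStep (f : ℕ → ℕ) (k : ℤ) : Prop := ∃ i : ℕ, k = (f i : ℤ) - i - 1

/-- The zigzag `{(i,j), (i−1,j), (i−1,j−1), (i−2,j−1), (i−2,j−2), …}` starting at a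
square `p = (i,j)`, used to define the snake of a horizontal lower-envelope edge. -/
def zigzagH (p : ℤ × ℤ) : Set (ℤ × ℤ) :=
  {q | ∃ t : ℕ, q = (p.1 - (((t + 1) / 2 : ℕ) : ℤ), p.2 - ((t / 2 : ℕ) : ℤ))}

/-- The zigzag `{(i,j), (i,j−1), (i−1,j−1), (i−1,j−2), (i−2,j−2), …}` starting at a
square `p = (i,j)`, used to define the snake of a vertical lower-envelope edge. -/
def zigzagV (p : ℤ × ℤ) : Set (ℤ × ℤ) :=
  {q | ∃ t : ℕ, q = (p.1 - ((t / 2 : ℕ) : ℤ), p.2 - (((t + 1) / 2 : ℕ) : ℤ))}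

/-- The diagram of the outer partition `λ` alone. -/
def lamCells (sh : SkewShape) : Set (ℤ × ℤ) := skewCells sh.lam (fun _ => 0)

/-- The snake `S_e` of the edge `e` of the lower envelope of `λ/μ` at diagonal
position `k`.  If `e` is vertical it is the right-hand edge of the square
`(i, λ_i − 1)` where `k = λ_i − i − 1`, and `S_e = (λ/μ) ∩ zigzagV` from that square;
if `e` is horizontal it is the lower edge of the lowest square of `λ` on the
diagonal `j − i = k + 1`, and `S_e = (λ/μ) ∩ zigzagH` from that square.
(If no such square of `λ/μ` exists, i.e. `e` also lies on the upper envelope, the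
intersection is empty, in accordance with `S_e = ∅`.) -/
def snake (sh : SkewShape) (k : ℤ) : Set (ℤ × ℤ) :=
  {q | q ∈ sh.cells ∧
    ((vertStep sh.lam k ∧ ∃ i : ℕ, k = (sh.lam i : ℤ) - i - 1 ∧
        q ∈ zigzagV ((i : ℤ), (sh.lam i : ℤ) - 1)) ∨
     (¬ vertStep sh.lam k ∧ ∃ p : ℤ × ℤ, p ∈ lamCells sh ∧ p.2 - p.1 = k + 1 ∧
        (p.1 + 1, p.2 + 1) ∉ lamCells sh ∧ q ∈ zigzagH p))}

/-- The snake at position `k` is a left snake: it comes from a vertical edge and has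
even length (= odd number of squares); its symbol in the snake sequence is `L_m`
with `m = (snake sh k).ncard / 2`. -/
def IsLeftSnakePos (sh : SkewShape) (k : ℤ) : Prop :=
  vertStep sh.lam k ∧ Odd (snake sh k).ncard

/-- The snake at position `k` is a right snake: it comes from a horizontal edge and
has even length (= odd number of squares); its symbol in the snake sequence is `R_m`
with `m = (snake sh k).ncard / 2`. -/
def IsRightSnakePos (sh : SkewShape) (k : ℤ) : Prop :=
  ¬ vertStep sh.lam k ∧ Odd (snake sh k).ncard

/-- An interval set of `λ/μ`: a set of `rank(λ/μ)` pairs `(u,v)` with `u < v`,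
all coordinates distinct, `q_u` a left-snake symbol `L_s` and `q_v` a right-snake
symbol `R_t` in the snake sequence. -/
def IsIntervalSet (sh : SkewShape) (I : Finset (ℤ × ℤ)) : Prop :=
  I.card = sh.rank ∧
  (∀ p ∈ I, p.1 < p.2 ∧ IsLeftSnakePos sh p.1 ∧ IsRightSnakePos sh p.2) ∧
  (∀ p ∈ I, ∀ q ∈ I, p ≠ q → p.1 ≠ q.1 ∧ p.1 ≠ q.2 ∧ p.2 ≠ q.1 ∧ p.2 ≠ q.2)

/-- `is(λ/μ)`: the number of interval sets of `λ/μ`. -/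
noncomputable def isNum (sh : SkewShape) : ℕ :=
  {I : Finset (ℤ × ℤ) | IsIntervalSet sh I}.ncard

/-- `L` is a link of the snake `S`: a pair of consecutive (edge-adjacent) squares of `S`. -/
def IsLinkOf (L S : Set (ℤ × ℤ)) : Prop :=
  ∃ p q : ℤ × ℤ, p ∈ S ∧ q ∈ S ∧ CellAdj p q ∧ L = {p, q}

/-- `L` is a link of some snake of `λ/μ`. -/
def IsLink (sh : SkewShape) (L : Set (ℤ × ℤ)) : Prop := ∃ k : ℤ, IsLinkOf L (snake sh k)

/-- Two links are consecutive if they are distinct and have a square in common. -/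
def ConsecutiveLinks (L1 L2 : Set (ℤ × ℤ)) : Prop := L1 ≠ L2 ∧ (L1 ∩ L2).Nonempty

/-- A border strip decomposition uses a link if some of its strips contains both
squares of the link. -/
def DecompUses (D : Set (Set (ℤ × ℤ))) (L : Set (ℤ × ℤ)) : Prop := ∃ B ∈ D, L ⊆ B

/-- A border strip tableau of shape `λ/μ` with `m` strips: a chain of partitions
`μ = c 0 ⊆ c 1 ⊆ ⋯ ⊆ c m = λ` each of whose successive quotients is a border strip. -/
def IsBSTableau (sh : SkewShape) (m : ℕ) (c : ℕ → ℕ → ℕ) : Prop :=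
  c 0 = sh.mu ∧ c m = sh.lam ∧ (∀ s, s ≤ m → IsPartitionFn (c s)) ∧
  ∀ s, s < m → (∀ i, c s i ≤ c (s + 1) i) ∧ IsBorderStrip (skewCells (c (s + 1)) (c s))

/-- The `s`-th border strip `c (s+1) / c s` of a tableau. -/
def tabStrip (c : ℕ → ℕ → ℕ) (s : ℕ) : Set (ℤ × ℤ) := skewCells (c (s + 1)) (c s)

/-- The border strip decomposition corresponding to a border strip tableau. -/
def tabDecomp (m : ℕ) (c : ℕ → ℕ → ℕ) : Set (Set (ℤ × ℤ)) :=
  {B | ∃ s, s < m ∧ B = tabStrip c s}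

/-- A border strip tableau, normalized so that the chain is constant from `m` on
(so that each abstract tableau is represented by exactly one pair `(m, c)`). -/
def IsNormalizedTab (sh : SkewShape) (m : ℕ) (c : ℕ → ℕ → ℕ) : Prop :=
  IsBSTableau sh m c ∧ ∀ s, m ≤ s → c s = sh.lam

/-- `mbst(λ/μ)`: the number of minimal border strip tableaux of shape `λ/μ`
(those whose corresponding decomposition is minimal). -/
noncomputable def mbst (sh : SkewShape) : ℕ :=
  {tc : ℕ × (ℕ → ℕ → ℕ) | IsNormalizedTab sh tc.1 tc.2 ∧
    IsMinBSD sh (tabDecomp tc.1 tc.2)}.ncard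

/-- The tableau `(m, c)` corresponds to the interval set `I`: in terms of the code,
the strip added from `c s` to `c (s+1)` replaces the vertical step at position `u`
by the one at position `v`, for some pair `(u,v) ∈ I`. -/
def TabCorresponds (sh : SkewShape) (m : ℕ) (c : ℕ → ℕ → ℕ) (I : Finset (ℤ × ℤ)) : Prop :=
  ∀ s, s < m → ∀ u v : ℤ,
    (vertStep (c s) u ∧ ¬ vertStep (c (s + 1)) u ∧
      vertStep (c (s + 1)) v ∧ ¬ vertStep (c s) v) →
    (u, v) ∈ I

/-- `ht(B)`: one less than the number of rows of a border strip. -/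
noncomputable def stripHt (B : Set (ℤ × ℤ)) : ℕ := {i : ℤ | ∃ j : ℤ, (i, j) ∈ B}.ncard - 1

/-- `ht(T)`: the sum of the heights of the strips of a tableau. -/
noncomputable def htTab (m : ℕ) (c : ℕ → ℕ → ℕ) : ℕ :=
  ∑ s ∈ Finset.range m, stripHt (tabStrip c s)

/-- The type of an interval set: the multiset of the numbers `v − u`. -/
def intervalSetType (I : Finset (ℤ × ℤ)) : Multiset ℕ :=
  I.val.map fun p => (p.2 - p.1).toNat

/-- The decomposition `D` has type `σ`: for every `n`, the multiplicity of `n` in `σ`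
is the number of strips of `D` of size `n`. -/
def DecompHasType (D : Set (Set (ℤ × ℤ))) (σ : Multiset ℕ) : Prop :=
  ∀ n : ℕ, Multiset.count n σ = {B ∈ D | B.ncard = n}.ncard

/-- `is_σ(λ/μ)`: the number of interval sets of type `σ`. -/
noncomputable def isTyped (sh : SkewShape) (σ : Multiset ℕ) : ℕ :=
  {I : Finset (ℤ × ℤ) | IsIntervalSet sh I ∧ intervalSetType I = σ}.ncard

/-- `mbsd_σ(λ/μ)`: the number of minimal border strip decompositions of type `σ`. -/
noncomputable def mbsdTyped (sh : SkewShape) (σ : Multiset ℕ) : ℕ :=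
  {D : Set (Set (ℤ × ℤ)) | IsMinBSD sh D ∧ DecompHasType D σ}.ncard

/-- `c(I)`: the number of crossings `u_i < u_j < v_i < v_j` of an interval set. -/
def crossings (I : Finset (ℤ × ℤ)) : ℕ :=
  ((I ×ˢ I).filter fun q => q.1.1 < q.2.1 ∧ q.2.1 < q.1.2 ∧ q.1.2 < q.2.2).card

/-- `I` has no crossings. -/
def Noncrossing (I : Finset (ℤ × ℤ)) : Prop :=
  ∀ p ∈ I, ∀ q ∈ I, ¬ (p.1 < q.1 ∧ q.1 < p.2 ∧ p.2 < q.2)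

/-- `z(λ/μ) = z(1) + ⋯ + z(r)` computed from the crossing-free interval set `P`:
`z(i) = #{j : u_i < j < v_i, c_j = 0}`. -/
noncomputable def zval (sh : SkewShape) (P : Finset (ℤ × ℤ)) : ℕ :=
  ∑ p ∈ P, {j : ℤ | p.1 < j ∧ j < p.2 ∧ vertStep sh.lam j}.ncard

/-- The tableau has type `ν` (a list of strip sizes, in order). -/
def TabHasType (c : ℕ → ℕ → ℕ) (ν : List ℕ) : Prop :=
  ∀ s, s < ν.length → (tabStrip c s).ncard = ν.getD s 0

/-- `χ^{λ/μ}(ν) = Σ_T (−1)^{ht(T)}`, summed over all border strip tableaux of shape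
`λ/μ` and type `ν` (the Murnaghan–Nakayama rule). -/
noncomputable def chi (sh : SkewShape) (ν : List ℕ) : ℤ :=
  ∑ᶠ c ∈ {c : ℕ → ℕ → ℕ | IsNormalizedTab sh ν.length c ∧ TabHasType c ν},
    (-1 : ℤ) ^ htTab ν.length c

/-- `h_a(1^t)` as a polynomial in `t`: the binomial coefficient
`C(t + a − 1, a) = t(t+1)⋯(t+a−1)/a!`, and `0` for `a < 0`. -/
noncomputable def hPoly (a : ℤ) : Polynomial ℚ :=
  if a < 0 then 0
  else Polynomial.C ((a.toNat.factorial : ℚ))⁻¹ *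
    ∏ s ∈ Finset.range a.toNat, (Polynomial.X + Polynomial.C (s : ℚ))

/-- The principal specialization `s_{λ/μ}(1^t)` as a polynomial in `t`, via the
Jacobi–Trudi identity: `det ( C(t + λ_i − μ_j − i + j − 1, λ_i − μ_j − i + j) )`. -/
noncomputable def jtPoly (sh : SkewShape) (n : ℕ) : Polynomial ℚ :=
  (Matrix.of fun i j : Fin n =>
    hPoly ((sh.lam i : ℤ) - (sh.mu j : ℤ) - ((i : ℕ) : ℤ) + ((j : ℕ) : ℤ))).det

/-! ### Vertical step positions and contents of squares -/

/-- The diagonal position `f i − i − 1` of the vertical boundary step in row `i`; as `i`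
varies these are exactly the `k` with `vertStep f k`. -/
def stepPos (f : ℕ → ℕ) (i : ℕ) : ℤ := (f i : ℤ) - i - 1

lemma stepPos_strictAnti {f : ℕ → ℕ} (hf : IsPartitionFn f) : StrictAnti (stepPos f) := by
  intro i j hij
  have := hf.1 i j hij.le
  simp only [stepPos]
  omega

lemma SkewShape.mem_cells_iff (sh : SkewShape) (i : ℕ) (j : ℤ) :
    ((i : ℤ), j) ∈ sh.cells ↔ (sh.mu i : ℤ) ≤ j ∧ j < (sh.lam i : ℤ) := by
  simp [SkewShape.cells, skewCells]

lemma SkewShape.mem_cells_diag (sh : SkewShape) (i : ℕ) (k : ℤ) :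
    ((i : ℤ), (i : ℤ) + k) ∈ sh.cells ↔ stepPos sh.mu i < k ∧ k ≤ stepPos sh.lam i := by
  rw [sh.mem_cells_iff]
  simp only [stepPos]
  omega

lemma SkewShape.nonneg_of_mem_cells {sh : SkewShape} {p : ℤ × ℤ} (h : p ∈ sh.cells) :
    0 ≤ p.1 := h.1

/-! ### Corners as turns of the upper envelope -/

/-- The diagonal through a square of content `k` starts at an outside corner iff the upper
envelope turns from a vertical step to a horizontal step at content `k`. -/
lemma outside_iff (sh : SkewShape) (i : ℕ) (k : ℤ) (h : ((i : ℤ), (i : ℤ) + k) ∈ sh.cells) :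
    (∃ q : ℤ × ℤ, OutsideCorner sh q ∧ ∃ n : ℕ, ((i : ℤ), (i : ℤ) + k) = (q.1 + n, q.2 + n)) ↔
      vertStep sh.mu (k - 1) ∧ ¬ vertStep sh.mu k := by
  have hm := stepPos_strictAnti sh.mu_part
  have hl := stepPos_strictAnti sh.lam_part
  rw [sh.mem_cells_diag] at h
  constructor
  · rintro ⟨⟨a, b⟩, ⟨h1, h2, h3⟩, n, hn⟩
    obtain ⟨a, rfl⟩ := Int.eq_ofNat_of_zero_le (SkewShape.nonneg_of_mem_cells h1)
    simp only [Prod.mk.injEq] at hn h2 h3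
    rw [sh.mem_cells_iff] at h1 h3
    refine ⟨⟨a, by omega⟩, ?_⟩
    rintro ⟨c, hc⟩
    have hca : c < a := hm.lt_iff_gt.1 (by simp only [stepPos]; omega)
    obtain ⟨a, rfl⟩ := Nat.exists_eq_succ_of_ne_zero (by omega : a ≠ 0)
    have h4 := sh.lam_part.1 a (a + 1) (by omega)
    have h5 := hm.antitone (by omega : c ≤ a)
    have e : ((a.succ : ℕ) : ℤ) - 1 = a := by push_cast; ring
    rw [e, sh.mem_cells_iff] at h2
    simp only [stepPos, Nat.succ_eq_add_one] at *
    omega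
  · rintro ⟨⟨a, ha⟩, hk⟩
    have hai : a ≤ i := hm.le_iff_ge.1 (by simp only [stepPos] at *; omega)
    have h4 := hl.antitone hai
    refine ⟨((a : ℤ), (a : ℤ) + k), ⟨?_, ?_, ?_⟩, i - a, ?_⟩
    · rw [sh.mem_cells_diag]
      simp only [stepPos] at *
      omega
    · intro hc
      have h0 := SkewShape.nonneg_of_mem_cells hc
      simp only at h0 hc
      obtain ⟨a, rfl⟩ := Nat.exists_eq_succ_of_ne_zero (by omega : a ≠ 0)
      have e : ((a.succ : ℕ) : ℤ) - 1 = a := by push_cast; ring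
      rw [e, sh.mem_cells_iff] at hc
      have h5 := hm (Nat.lt_succ_self a)
      refine hk ⟨a, ?_⟩
      simp only [stepPos, Nat.succ_eq_add_one] at *
      omega
    · simp only
      rw [sh.mem_cells_iff]
      omega
    · simp only [Prod.mk.injEq]
      omega

/-- The diagonal through a square of content `k` starts at an inside corner iff the upper
envelope turns from a horizontal step to a vertical step at content `k`. -/
lemma inside_iff (sh : SkewShape) (i : ℕ) (k : ℤ) (h : ((i : ℤ), (i : ℤ) + k) ∈ sh.cells) :
    (∃ q : ℤ × ℤ, InsideCorner sh q ∧ ∃ n : ℕ, ((i : ℤ), (i : ℤ) + k) = (q.1 + n, q.2 + n)) ↔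
      ¬ vertStep sh.mu (k - 1) ∧ vertStep sh.mu k := by
  have hm := stepPos_strictAnti sh.mu_part
  have hl := stepPos_strictAnti sh.lam_part
  rw [sh.mem_cells_diag] at h
  constructor
  · rintro ⟨⟨a, b⟩, ⟨h1, h2, h3, h4⟩, n, hn⟩
    have h0 := SkewShape.nonneg_of_mem_cells h2
    simp only [Prod.mk.injEq] at hn h0 h2 h3 h4
    obtain ⟨c, hc⟩ := Int.eq_ofNat_of_zero_le h0
    obtain rfl : a = ((c + 1 : ℕ) : ℤ) := by push_cast; omega
    rw [hc, sh.mem_cells_iff] at h2 h4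
    rw [sh.mem_cells_iff] at h1 h3
    refine ⟨?_, ⟨c, by omega⟩⟩
    rintro ⟨d, hd⟩
    -- Position `k - 1` would lie strictly between those of the consecutive rows `c`, `c + 1`.
    have h5 : c < d := hm.lt_iff_gt.1 (by simp only [stepPos]; omega)
    have h6 : d < c + 1 := hm.lt_iff_gt.1 (by simp only [stepPos]; omega)
    omega
  · rintro ⟨hk, ⟨c, hc⟩⟩
    have hci : c + 1 ≤ i := hm.lt_iff_gt.1 (by simp only [stepPos] at *; omega)
    have h4 := hl.antitone hci
    have h5 := hm (Nat.lt_succ_self c)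
    have h6 : stepPos sh.mu (c + 1) ≠ k - 1 := fun e => hk ⟨c + 1, e.symm⟩
    have h7 := sh.lam_part.1 c (c + 1) (by omega)
    have e : ((c + 1 : ℕ) : ℤ) - 1 = c := by push_cast; ring
    refine ⟨(((c + 1 : ℕ) : ℤ), ((c + 1 : ℕ) : ℤ) + k), ⟨?_, ?_, ?_, ?_⟩, i - (c + 1), ?_⟩
    · rw [sh.mem_cells_diag]
      simp only [stepPos, Nat.succ_eq_add_one] at *
      omega
    · simp only
      rw [e, sh.mem_cells_iff]
      simp only [stepPos, Nat.succ_eq_add_one] at *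
      omega
    · simp only
      rw [sh.mem_cells_iff]
      simp only [stepPos, Nat.succ_eq_add_one] at *
      omega
    · simp only
      rw [e, sh.mem_cells_iff]
      omega
    · simp only [Prod.mk.injEq]
      omega

/-! ### Counting along rows -/

/-- Counting squares row by row: in row `i` the contents of the squares of `λ/μ` fill the
interval `(stepPos μ i, stepPos λ i]`. -/
lemma ncard_cells_eq_sum (sh : SkewShape) {N : ℕ} (hN : ∀ i, N ≤ i → sh.lam i = 0)
    (Q : ℤ × ℤ → Prop) (P : ℤ → Prop) [DecidablePred P]
    (hQ : ∀ (i : ℕ) (k : ℤ), ((i : ℤ), (i : ℤ) + k) ∈ sh.cells →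
      (Q ((i : ℤ), (i : ℤ) + k) ↔ P k)) :
    {p : ℤ × ℤ | p ∈ sh.cells ∧ Q p}.ncard =
      ∑ i ∈ Finset.range N,
        ((Finset.Ioc (stepPos sh.mu i) (stepPos sh.lam i)).filter P).card := by
  rw [← Finset.card_sigma]
  have hinj : Function.Injective
      (fun x : (_ : ℕ) × ℤ => (((x.1 : ℤ), (x.1 : ℤ) + x.2) : ℤ × ℤ)) := by
    rintro ⟨i, k⟩ ⟨j, l⟩ h
    simp only [Prod.mk.injEq] at h
    obtain rfl : i = j := by omega
    obtain rfl : k = l := by omega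
    rfl
  rw [← Finset.card_image_of_injective _ hinj, ← Set.ncard_coe_finset]
  congr 1
  ext ⟨a, b⟩
  simp only [Set.mem_ofPred_eq, Finset.coe_image, Set.mem_image, Finset.mem_coe,
    Finset.mem_sigma, Finset.mem_range, Finset.mem_filter, Finset.mem_Ioc, Sigma.exists,
    Prod.mk.injEq]
  constructor
  · rintro ⟨h, hq⟩
    obtain ⟨i, rfl⟩ := Int.eq_ofNat_of_zero_le (SkewShape.nonneg_of_mem_cells h)
    obtain ⟨k, rfl⟩ : ∃ k, b = (i : ℤ) + k := ⟨b - i, by ring⟩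
    refine ⟨i, k, ⟨?_, (sh.mem_cells_diag i k).1 h, (hQ i k h).1 hq⟩, rfl, rfl⟩
    by_contra hi
    have h0 := hN i (by omega)
    rw [sh.mem_cells_iff] at h
    omega
  · rintro ⟨i, k, ⟨_, h, hp⟩, rfl, rfl⟩
    have h' := (sh.mem_cells_diag i k).2 h
    exact ⟨h', (hQ i k h').2 hp⟩

open Classical in
/-- Telescoping: going through the positions in `(a, b]`, the changes from `v` to `¬ v` and
those from `¬ v` to `v` alternate, so their numbers differ by the difference of the
indicators of `v` at the two ends. -/
lemma turns_telescope (v : ℤ → Prop) {a b : ℤ} (hab : a ≤ b) :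
    (((Finset.Ioc a b).filter fun k => v (k - 1) ∧ ¬ v k).card : ℤ) + (if v b then 1 else 0) =
      ((Finset.Ioc a b).filter fun k => ¬ v (k - 1) ∧ v k).card + (if v a then 1 else 0) := by
  induction b, hab using Int.leInduction with
  | base => simp
  | succ b hb ih =>
    have e : Finset.Ioc a (b + 1) = insert (b + 1) (Finset.Ioc a b) := by
      ext x
      simp only [Finset.mem_Ioc, Finset.mem_insert]
      omega
    have hn : b + 1 ∉ Finset.Ioc a b := by simp
    rw [e, Finset.filter_insert, Finset.filter_insert]
    by_cases h1 : v b <;> by_cases h2 : v (b + 1) <;>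
      simp [h1, h2, hn] at ih ⊢ <;> linarith

/-! ### Comparing the two codes -/

/-- A position that is a vertical step for `f` but not for `g` comes from one of the first `N`
rows, since below them `f` and `g` both vanish and have the same vertical steps. -/
lemma vertStep_sdiff {f g : ℕ → ℕ} {N : ℕ} (hf : ∀ i, N ≤ i → f i = 0)
    (hg : ∀ i, N ≤ i → g i = 0) (hf' : IsPartitionFn f) :
    {k : ℤ | vertStep f k ∧ ¬ vertStep g k} =
      ↑((Finset.range N).image (stepPos f) \ (Finset.range N).image (stepPos g)) := by
  have hm := stepPos_strictAnti hf'
  ext k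
  simp only [Set.mem_ofPred_eq, Finset.coe_sdiff, Finset.coe_image, Set.mem_sdiff, Set.mem_image,
    Finset.mem_coe, Finset.mem_range]
  constructor
  · rintro ⟨⟨i, hi⟩, h⟩
    refine ⟨⟨i, ?_, hi.symm⟩, fun ⟨j, _, hj⟩ => h ⟨j, hj.symm⟩⟩
    by_contra hiN
    exact h ⟨i, by rw [hi, hf i (by omega), hg i (by omega)]⟩
  · rintro ⟨⟨i, hi, rfl⟩, h⟩
    refine ⟨⟨i, rfl⟩, ?_⟩
    rintro ⟨j, hj⟩
    by_cases hjN : j < N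
    · exact h ⟨j, hjN, hj.symm⟩
    · -- Then `k` is also the position of row `j ≥ N` of `f`, contradicting injectivity.
      have : stepPos f i = stepPos f j := by
        rw [hj]
        simp only [stepPos]
        rw [hf j (by omega), hg j (by omega)]
      have := hm.injective this
      omega

/-- `rank(λ/μ)` equals the number of columns of `code(λ/μ)` equal to
`(0;1)` (top entry `c_k = 0`, i.e. a vertical step of the lower envelope, which is the
boundary path of `λ`; bottom entry `d_k = 1`, i.e. a horizontal step of the upper
envelope, which is the boundary path of `μ`), and also the number of columns equal
to `(1;0)`. -/
theorem rank_eq_code_columns (sh : SkewShape) :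
    sh.rank = {k : ℤ | vertStep sh.lam k ∧ ¬ vertStep sh.mu k}.ncard ∧
    sh.rank = {k : ℤ | ¬ vertStep sh.lam k ∧ vertStep sh.mu k}.ncard := by
  classical
  obtain ⟨N, hN⟩ := sh.lam_part.2
  have hN' : ∀ i, N ≤ i → sh.mu i = 0 := fun i hi => by
    have := sh.mu_le i
    have := hN i hi
    omega
  have hm := stepPos_strictAnti sh.mu_part
  have hl := stepPos_strictAnti sh.lam_part
  have hle : ∀ i, stepPos sh.mu i ≤ stepPos sh.lam i := fun i => by
    have := sh.mu_le i
    simp only [stepPos]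
    omega
  have hp := ncard_cells_eq_sum sh hN
    (fun p => ∃ q : ℤ × ℤ, OutsideCorner sh q ∧ ∃ n : ℕ, p = (q.1 + n, q.2 + n))
    (fun k => vertStep sh.mu (k - 1) ∧ ¬ vertStep sh.mu k) (outside_iff sh)
  have hn := ncard_cells_eq_sum sh hN
    (fun p => ∃ q : ℤ × ℤ, InsideCorner sh q ∧ ∃ n : ℕ, p = (q.1 + n, q.2 + n))
    (fun k => ¬ vertStep sh.mu (k - 1) ∧ vertStep sh.mu k) (inside_iff sh)
  have key : sh.dplus = sh.dminus +
      ((Finset.range N).filter fun i => ¬ vertStep sh.mu (stepPos sh.lam i)).card := by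
    rw [SkewShape.dplus, SkewShape.dminus, hp, hn, Finset.card_filter, ← Finset.sum_add_distrib]
    refine Finset.sum_congr rfl fun i _ => ?_
    have ht := turns_telescope (vertStep sh.mu) (hle i)
    have hv : vertStep sh.mu (stepPos sh.mu i) := ⟨i, rfl⟩
    rw [if_pos hv] at ht
    by_cases hw : vertStep sh.mu (stepPos sh.lam i)
    · rw [if_pos hw] at ht
      rw [if_neg (not_not.2 hw)]
      omega
    · rw [if_neg hw] at ht
      rw [if_pos hw]
      omega
  have hrank : sh.rank =
      ((Finset.range N).filter fun i => ¬ vertStep sh.mu (stepPos sh.lam i)).card := by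
    rw [SkewShape.rank, key, Nat.add_sub_cancel_left]
  have h1 : sh.rank = {k : ℤ | vertStep sh.lam k ∧ ¬ vertStep sh.mu k}.ncard := by
    rw [hrank, ← Finset.card_image_of_injective _ hl.injective, ← Set.ncard_coe_finset]
    congr 1
    ext k
    simp only [Finset.coe_image, Set.mem_image, Finset.mem_coe, Finset.mem_filter,
      Finset.mem_range, Set.mem_ofPred_eq]
    constructor
    · rintro ⟨i, ⟨_, h⟩, rfl⟩
      exact ⟨⟨i, rfl⟩, h⟩
    · rintro ⟨⟨i, rfl⟩, h⟩
      refine ⟨i, ⟨?_, h⟩, rfl⟩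
      by_contra hi
      exact h ⟨i, by rw [hN i (by omega), hN' i (by omega)]⟩
  refine ⟨h1, h1.trans ?_⟩
  have e : {k : ℤ | ¬ vertStep sh.lam k ∧ vertStep sh.mu k} =
      {k : ℤ | vertStep sh.mu k ∧ ¬ vertStep sh.lam k} := by
    ext k
    exact and_comm
  rw [e, vertStep_sdiff hN hN' sh.lam_part, vertStep_sdiff hN' hN sh.mu_part,
    Set.ncard_coe_finset, Set.ncard_coe_finset]
  -- Both envelopes have `N` vertical steps in the first `N` rows.
  exact Finset.card_sdiff_comm (by
    rw [Finset.card_image_of_injective _ hl.injective, Finset.card_image_of_injective _ hm.injective])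

end

end SkewBorder
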